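/- For every d ≥ 1 there is a constant C > 0 depending only on d with the following property. Let β ∈ (0,1] and τ ≥ 0, and let u ∈ L²(𝕋^d) and a periodic vector field w on 𝕋^d be such that ‖(A^d + I) e^{τ A^{β/2}} w‖_{L²(𝕋^d)} < ∞ and ‖A^{1/2} e^{τ A^{β/2}} u‖_{L²(𝕋^d)} < ∞. Then |( e^{τ A^{β/2}} (w·∇u), e^{τ A^{β/2}} u )| ≤ C ‖(A^d + I) e^{τ A^{β/2}} w‖_{L²(𝕋^d)} · ‖A^{1/2} e^{τ A^{β/2}} u‖_{L²(𝕋^d)} · ‖e^{τ A^{β/2}} u‖_{L²(𝕋^d)}. -/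

import Mathlib

/-! Writing `E j = exp (τ |j|^β)`, subadditivity of `t ↦ t^β` (for `β ≤ 1`) and the triangle
inequality give `E j ≤ E (j - k) * E k`. Hence the `(j, k)` term of the trilinear form is at most
`B (j - k) * D k * A j`, with `B l = E l |b l|`, `D k = |k| E k |a k|`, `A j = E j |a j|`.
Putting `l = j - k`, Cauchy–Schwarz in `k` (`A` being translated by `l`) gives
`‖B‖_{ℓ¹} ‖D‖_{ℓ²} ‖A‖_{ℓ²}`; a second Cauchy–Schwarz bounds `‖B‖_{ℓ¹}` by
`‖(|l|^{2d} + 1)⁻¹‖_{ℓ²} ‖(|l|^{2d} + 1) B‖_{ℓ²}`. The first factor is finite because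
`(|l|^{2d} + 1)⁻¹ ≤ 2^d ∏ i, (1 + l_i²)⁻¹`, and its value serves as
the constant: each of the three norms on the right contributes a factor `(2π)^{d/2}`, and the
product `(2π)^{3d/2}` exceeds the `(2π)^d` on the left. -/

open Real Set

noncomputable section

/-- Euclidean norm `|j|` of a lattice point `j ∈ ℤ^d`. -/
def zn (d : ℕ) (j : Fin d → ℤ) : ℝ := Real.sqrt (∑ i, ((j i : ℝ)) ^ 2)

/-- Cauchy–Schwarz for nonnegative square-summable families. -/
lemma cs_tsum {ι : Type*} {f g : ι → ℝ} (hf : ∀ i, 0 ≤ f i) (hg : ∀ i, 0 ≤ g i)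
    (sf : Summable fun i => f i ^ 2) (sg : Summable fun i => g i ^ 2) :
    (Summable fun i => f i * g i) ∧
      ∑' i, f i * g i ≤ √(∑' i, f i ^ 2) * √(∑' i, g i ^ 2) := by
  have h := Real.summable_and_inner_le_Lp_mul_Lq_tsum_of_nonneg Real.HolderConjugate.two_two hf hg
    (by simpa using sf) (by simpa using sg)
  simpa [Real.sqrt_eq_rpow] using h

/-- Young-type bound for a trilinear form: `F` is dominated by the convolution kernel `H * X`
acting between `ℓ²` sequences `D` and `A`. -/
lemma trilinear_bound {G : Type*} [AddCommGroup G] {H X D A : G → ℝ}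
    (hH : ∀ l, 0 ≤ H l) (hX : ∀ l, 0 ≤ X l) (hD : ∀ l, 0 ≤ D l) (hA : ∀ l, 0 ≤ A l)
    (sH : Summable fun l => H l ^ 2) (sX : Summable fun l => X l ^ 2)
    (sD : Summable fun l => D l ^ 2) (sA : Summable fun l => A l ^ 2)
    (F : G × G → ℂ) (hF : ∀ p : G × G, ‖F p‖ ≤ H (p.1 - p.2) * X (p.1 - p.2) * (D p.2 * A p.1)) :
    ‖∑' p, F p‖ ≤ √(∑' l, H l ^ 2) * √(∑' l, X l ^ 2) * (√(∑' l, D l ^ 2) * √(∑' l, A l ^ 2)) := by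
  set M := √(∑' l, D l ^ 2) * √(∑' l, A l ^ 2)
  let e : G × G ≃ G × G :=
    { toFun := fun q => (q.2 + q.1, q.2)
      invFun := fun p => (p.1 - p.2, p.2)
      left_inv := fun q => by simp
      right_inv := fun p => by simp }
  let g : G × G → ℝ := fun q => H q.1 * X q.1 * (D q.2 * A (q.2 + q.1))
  have hg : ∀ q, 0 ≤ g q := fun q =>
    mul_nonneg (mul_nonneg (hH _) (hX _)) (mul_nonneg (hD _) (hA _))
  obtain ⟨sB, hB⟩ := cs_tsum hH hX sH sX
  have inner : ∀ l, (Summable fun k => D k * A (k + l)) ∧ ∑' k, D k * A (k + l) ≤ M := by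
    intro l
    have sA' : Summable fun k => A (k + l) ^ 2 :=
      (Equiv.addRight l).summable_iff (f := fun k => A k ^ 2) |>.2 sA
    have h := cs_tsum (g := fun k => A (k + l)) hD (fun k => hA _) sD sA'
    have hs : ∑' k, A (k + l) ^ 2 = ∑' k, A k ^ 2 :=
      (Equiv.addRight l).tsum_eq (fun k => A k ^ 2)
    rwa [hs] at h
  have hfib : ∀ l, ∑' k, g (l, k) = H l * X l * ∑' k, D k * A (k + l) := fun l => by
    simp only [g, tsum_mul_left]
  have hle : ∀ l, ∑' k, g (l, k) ≤ H l * X l * M := fun l => by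
    rw [hfib]
    exact mul_le_mul_of_nonneg_left (inner l).2 (mul_nonneg (hH l) (hX l))
  have sout : Summable fun l => ∑' k, g (l, k) :=
    Summable.of_nonneg_of_le (fun l => tsum_nonneg fun k => hg _) hle (sB.mul_right M)
  have sg : Summable g := (summable_prod_of_nonneg hg).2 ⟨fun l => (inner l).1.mul_left (H l * X l), sout⟩
  have key : ‖∑' q, F (e q)‖ ≤ ∑' q, g q :=
    tsum_of_norm_bounded sg.hasSum fun q => by simpa [e, g] using hF (e q)
  rw [e.tsum_eq F] at key
  calc ‖∑' p, F p‖ ≤ ∑' q, g q := key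
    _ = ∑' l, ∑' k, g (l, k) := sg.tsum_prod
    _ ≤ ∑' l, H l * X l * M := sout.tsum_le_tsum hle (sB.mul_right M)
    _ = (∑' l, H l * X l) * M := tsum_mul_right
    _ ≤ _ := mul_le_mul_of_nonneg_right hB (by positivity)

lemma summable_pi_prod {d : ℕ} {ι : Type*} {f : ι → ℝ} (hf : ∀ i, 0 ≤ f i) (sf : Summable f) :
    Summable fun l : Fin d → ι => ∏ i, f (l i) := by
  classical
  refine summable_of_sum_le (c := (∑' n, f n) ^ d)
    (fun l => Finset.prod_nonneg fun i _ => hf _) fun s => ?_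
  -- enclose `s` in a box, over which the sum factorises
  calc ∑ l ∈ s, ∏ i, f (l i)
      ≤ ∑ l ∈ Fintype.piFinset fun i : Fin d => s.image fun l => l i, ∏ i, f (l i) := by
        refine Finset.sum_le_sum_of_subset_of_nonneg (fun l hl => ?_)
          fun l _ _ => Finset.prod_nonneg fun i _ => hf _
        exact Fintype.mem_piFinset.2 fun i => Finset.mem_image_of_mem _ hl
    _ = ∏ i : Fin d, ∑ n ∈ s.image fun l => l i, f n := (Finset.prod_univ_sum _ _).symm
    _ ≤ ∏ _i : Fin d, ∑' n, f n :=
        Finset.prod_le_prod (fun i _ => Finset.sum_nonneg fun n _ => hf n)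
          fun i _ => sf.sum_le_tsum _ fun n _ => hf n
    _ = _ := by simp

lemma zn_nonneg (d : ℕ) (j : Fin d → ℤ) : 0 ≤ zn d j := Real.sqrt_nonneg _

lemma zn_sq (d : ℕ) (j : Fin d → ℤ) : zn d j ^ 2 = ∑ i, (j i : ℝ) ^ 2 :=
  Real.sq_sqrt (Finset.sum_nonneg fun _ _ => sq_nonneg _)

lemma zn_le_add (d : ℕ) (j k : Fin d → ℤ) : zn d j ≤ zn d (j - k) + zn d k := by
  have h : ∀ l : Fin d → ℤ, zn d l = ‖WithLp.toLp 2 fun i => (l i : ℝ)‖ := fun l => by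
    simp [zn, EuclideanSpace.norm_eq]
  rw [h, h, h]
  refine le_trans (le_of_eq ?_) (norm_add_le _ _)
  congr 1
  ext i
  simp

lemma summable_weight (d : ℕ) :
    Summable fun l : Fin d → ℤ => ((zn d l ^ (2 * d) + 1)⁻¹) ^ 2 := by
  have s1 : Summable fun n : ℤ => (1 + (n : ℝ) ^ 2)⁻¹ := by
    refine Summable.of_norm_bounded_eventually
      (Real.summable_one_div_int_pow.2 (by norm_num : 1 < 2)) ?_
    filter_upwards [(Set.finite_singleton (0 : ℤ)).compl_mem_cofinite] with n hn
    have h0 : (n : ℝ) ≠ 0 := by exact_mod_cast hn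
    rw [Real.norm_of_nonneg (by positivity), one_div]
    exact inv_anti₀ (by positivity) (by linarith)
  refine Summable.of_nonneg_of_le (fun l => by positivity) (fun l => ?_)
    ((summable_pi_prod (d := d) (fun n => by positivity) s1).mul_left (2 ^ d))
  set x := zn d l ^ 2 with hx
  have hx0 : 0 ≤ x := sq_nonneg _
  have hprod : ∏ i, (1 + (l i : ℝ) ^ 2) ≤ 2 ^ d * (x ^ d + 1) := by
    calc ∏ i, (1 + (l i : ℝ) ^ 2) ≤ ∏ _i : Fin d, (1 + x) := by
          refine Finset.prod_le_prod (fun i _ => by positivity) fun i _ => ?_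
          rw [hx, zn_sq]
          gcongr
          exact Finset.single_le_sum (f := fun i => (l i : ℝ) ^ 2) (fun _ _ => sq_nonneg _)
            (Finset.mem_univ i)
      _ = (1 + x) ^ d := by simp
      _ ≤ 2 ^ d * (x ^ d + 1) := by
          rcases le_total x 1 with h | h
          · calc (1 + x) ^ d ≤ 2 ^ d := by gcongr; linarith
              _ ≤ _ := le_mul_of_one_le_right (by positivity) (by linarith [pow_nonneg hx0 d])
          · calc (1 + x) ^ d ≤ (2 * x) ^ d := by gcongr; linarith
              _ = 2 ^ d * x ^ d := mul_pow _ _ _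
              _ ≤ _ := by gcongr; linarith
  have hP : 0 < ∏ i, (1 + (l i : ℝ) ^ 2) := Finset.prod_pos fun i _ => by positivity
  rw [pow_mul, ← hx, Finset.prod_inv_distrib]
  have hy : 0 < x ^ d + 1 := by positivity
  calc ((x ^ d + 1)⁻¹) ^ 2 ≤ (x ^ d + 1)⁻¹ := by
        refine pow_le_of_le_one (by positivity) (inv_le_one_of_one_le₀ ?_) (by norm_num)
        linarith [pow_nonneg hx0 d]
    _ ≤ 2 ^ d * (∏ i, (1 + (l i : ℝ) ^ 2))⁻¹ := by
        rw [← div_eq_mul_inv, le_div_iff₀ hP, inv_mul_le_iff₀ hy]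
        linarith

/-- The Gevrey weight `exp (τ |j|^β)` is submultiplicative when `β ≤ 1`. -/
lemma gevrey_weight_le (d : ℕ) {β τ : ℝ} (hβ : β ∈ Ioc (0 : ℝ) 1) (hτ : 0 ≤ τ)
    (j k : Fin d → ℤ) :
    Real.exp (τ * zn d j ^ β) ≤
      Real.exp (τ * zn d (j - k) ^ β) * Real.exp (τ * zn d k ^ β) := by
  rw [← Real.exp_add, ← mul_add]
  gcongr
  exact (Real.rpow_le_rpow (zn_nonneg d j) (zn_le_add d j k) hβ.1.le).trans
    (Real.rpow_add_le_add_rpow (zn_nonneg _ _) (zn_nonneg _ _) hβ.1.le hβ.2)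

lemma norm_transport_symbol_le (d : ℕ) (v : Fin d → ℂ) (k : Fin d → ℤ) :
    ‖∑ i, v i * (Complex.I * ((k i : ℤ) : ℂ))‖ ≤ √(∑ i, ‖v i‖ ^ 2) * zn d k := by
  calc ‖∑ i, v i * (Complex.I * ((k i : ℤ) : ℂ))‖
      ≤ ∑ i, ‖v i * (Complex.I * ((k i : ℤ) : ℂ))‖ := norm_sum_le _ _
    _ = ∑ i, ‖v i‖ * |(k i : ℝ)| := by simp
    _ ≤ √(∑ i, ‖v i‖ ^ 2) * √(∑ i, |(k i : ℝ)| ^ 2) := Real.sum_mul_le_sqrt_mul_sqrt _ _ _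
    _ = _ := by simp [zn]

/-- for every `d ≥ 1` there is `C > 0` depending only on `d` such that, in
Fourier variables (with `a` the coefficients of `u` and `b i` the coefficients of the
components `w_i` of the vector field `w`, satisfying the reality condition, with
`‖(A^d+I)e^{τA^{β/2}}w‖_{L²} < ∞` and `‖A^{1/2}e^{τA^{β/2}}u‖_{L²} < ∞`),
`|(e^{τA^{β/2}}(w·∇u), e^{τA^{β/2}}u)|
  ≤ C ‖(A^d+I)e^{τA^{β/2}}w‖_{L²} ‖A^{1/2}e^{τA^{β/2}}u‖_{L²} ‖e^{τA^{β/2}}u‖_{L²}`,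
where `∇` acts on Fourier coefficients as multiplication by `i k`. -/
theorem gevrey_transport_estimate
    (d : ℕ) (hd : 1 ≤ d) :
    ∃ C : ℝ, 0 < C ∧
      ∀ (β τ : ℝ), β ∈ Ioc (0 : ℝ) 1 → 0 ≤ τ →
      ∀ (a : (Fin d → ℤ) → ℂ) (b : (Fin d → ℤ) → Fin d → ℂ),
        (∀ j, a (-j) = starRingEnd ℂ (a j)) →
        (∀ j i, b (-j) i = starRingEnd ℂ (b j i)) →
        Summable (fun j : Fin d → ℤ =>
          (zn d j ^ (2 * d) + 1) ^ 2 * Real.exp (2 * τ * zn d j ^ β)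
            * ∑ i, ‖b j i‖ ^ 2) →
        Summable (fun j : Fin d → ℤ =>
          zn d j ^ 2 * Real.exp (2 * τ * zn d j ^ β) * ‖a j‖ ^ 2) →
        Summable (fun j : Fin d → ℤ =>
          Real.exp (2 * τ * zn d j ^ β) * ‖a j‖ ^ 2) →
        (2 * π) ^ d *
            ‖∑' jk : (Fin d → ℤ) × (Fin d → ℤ),
                (Real.exp (2 * τ * zn d jk.1 ^ β) : ℂ)
                  * (∑ i, b (jk.1 - jk.2) i * (Complex.I * ((jk.2 i : ℤ) : ℂ)))
                  * a jk.2 * starRingEnd ℂ (a jk.1)‖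
          ≤ C * Real.sqrt ((2 * π) ^ d * ∑' j : Fin d → ℤ,
                (zn d j ^ (2 * d) + 1) ^ 2 * Real.exp (2 * τ * zn d j ^ β)
                  * ∑ i, ‖b j i‖ ^ 2)
              * Real.sqrt ((2 * π) ^ d * ∑' j : Fin d → ℤ,
                  zn d j ^ 2 * Real.exp (2 * τ * zn d j ^ β) * ‖a j‖ ^ 2)
              * Real.sqrt ((2 * π) ^ d * ∑' j : Fin d → ℤ,
                  Real.exp (2 * τ * zn d j ^ β) * ‖a j‖ ^ 2) := by
  have hexp : ∀ x : ℝ, Real.exp (2 * x) = Real.exp x ^ 2 := fun x => by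
    rw [← Real.exp_nat_mul]; norm_num
  set K := √(∑' l : Fin d → ℤ, ((zn d l ^ (2 * d) + 1)⁻¹) ^ 2) with hK
  have hKpos : 0 < K := by
    refine Real.sqrt_pos.2 ((summable_weight d).tsum_pos (fun l => by positivity) 0 ?_)
    have := zn_nonneg d 0
    positivity
  refine ⟨K, hKpos, fun β τ hβ hτ a b _ _ sb sD sA => ?_⟩
  let E : (Fin d → ℤ) → ℝ := fun j => Real.exp (τ * zn d j ^ β)
  have hE : ∀ j, Real.exp (2 * τ * zn d j ^ β) = E j ^ 2 := fun j => by rw [mul_assoc, hexp]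
  have hE0 : ∀ j, 0 < E j := fun j => Real.exp_pos _
  have hz := zn_nonneg d
  let X : (Fin d → ℤ) → ℝ := fun l => (zn d l ^ (2 * d) + 1) * (E l * √(∑ i, ‖b l i‖ ^ 2))
  let D : (Fin d → ℤ) → ℝ := fun k => zn d k * (E k * ‖a k‖)
  let A : (Fin d → ℤ) → ℝ := fun j => E j * ‖a j‖
  have eX : ∀ l, (zn d l ^ (2 * d) + 1) ^ 2 * Real.exp (2 * τ * zn d l ^ β) * ∑ i, ‖b l i‖ ^ 2
      = X l ^ 2 := fun l => by
    simp only [X, mul_pow, hE]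
    rw [Real.sq_sqrt (Finset.sum_nonneg fun _ _ => sq_nonneg _)]
    ring
  have eD : ∀ k, zn d k ^ 2 * Real.exp (2 * τ * zn d k ^ β) * ‖a k‖ ^ 2 = D k ^ 2 := fun k => by
    simp only [D, hE]; ring
  have eA : ∀ j, Real.exp (2 * τ * zn d j ^ β) * ‖a j‖ ^ 2 = A j ^ 2 := fun j => by
    simp only [A, hE]; ring
  simp only [eX] at sb ⊢
  simp only [eD] at sD ⊢
  simp only [eA] at sA ⊢
  have key := trilinear_bound (H := fun l => (zn d l ^ (2 * d) + 1)⁻¹) (X := X) (D := D) (A := A)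
    (fun l => by have := hz l; positivity)
    (fun l => by have := hz l; have := hE0 l; positivity)
    (fun l => by have := hz l; have := hE0 l; positivity)
    (fun l => by have := hE0 l; positivity)
    (summable_weight d) sb sD sA
    (fun jk => (Real.exp (2 * τ * zn d jk.1 ^ β) : ℂ)
                  * (∑ i, b (jk.1 - jk.2) i * (Complex.I * ((jk.2 i : ℤ) : ℂ)))
                  * a jk.2 * starRingEnd ℂ (a jk.1))
    (by
      rintro ⟨j, k⟩
      have hw : (zn d (j - k) ^ (2 * d) + 1) ≠ 0 := by have := hz (j - k); positivity
      have hn : ‖(Real.exp (2 * τ * zn d j ^ β) : ℂ)‖ = E j ^ 2 := by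
        rw [← hE, Complex.norm_real, Real.norm_of_nonneg (Real.exp_pos _).le]
      have h1 : E j ≤ E (j - k) * E k := gevrey_weight_le d hβ hτ j k
      have h2 := norm_transport_symbol_le d (b (j - k)) k
      have h3 := hE0 j
      have h4 := hE0 k
      have h5 := hE0 (j - k)
      have h6 := hz k
      simp only [X, D, A, norm_mul, RCLike.norm_conj, hn]
      calc E j ^ 2 * ‖∑ i, b (j - k) i * (Complex.I * ((k i : ℤ) : ℂ))‖ * ‖a k‖ * ‖a j‖
          = E j * E j * ‖∑ i, b (j - k) i * (Complex.I * ((k i : ℤ) : ℂ))‖ * ‖a k‖ * ‖a j‖ := by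
            ring
        _ ≤ (E (j - k) * E k) * E j * (√(∑ i, ‖b (j - k) i‖ ^ 2) * zn d k) * ‖a k‖ * ‖a j‖ := by
            gcongr
        _ = _ := by rw [inv_mul_cancel_left₀ hw]; ring)
  rw [← hK] at key
  have hc : (1 : ℝ) ≤ (2 * π) ^ d := one_le_pow₀ (by linarith [Real.pi_gt_three])
  set c : ℝ := (2 * π) ^ d
  have hc0 : 0 ≤ c := by linarith
  have hs : 1 ≤ √c := Real.one_le_sqrt.2 hc
  simp only [Real.sqrt_mul hc0]
  set T := K * √(∑' l, X l ^ 2) * (√(∑' l, D l ^ 2) * √(∑' l, A l ^ 2)) with hT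
  have hT0 : 0 ≤ T := by positivity
  calc c * _ ≤ c * T := by gcongr
    _ ≤ c * √c * T := by
        gcongr
        exact le_mul_of_one_le_right hc0 hs
    _ = (√c * √c) * √c * T := by rw [Real.mul_self_sqrt hc0]
    _ = _ := by rw [hT]; ring
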